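/- For every real path-loss exponent η ≥ 2, every κ > 0 and P > 0, every integer T ≥ 7, every integer t with 4 ≤ t ≤ T−3, and every choice of power-split parameters α_1, …, α_{T−2} ∈ [0,1], the interference power satisfies P_int(t) < π² κ P (using that Σ_{n=1}^{∞} n^{−η} ≤ Σ_{n=1}^{∞} n^{−2} = π²/6 for η ≥ 2). -/

import Mathlib

/-!
The gain `x ^ (-η)` decreases with the distance `x`, so a coherent pair of transmissions whose
nearer source is at distance `j` contributes at most `4 κP j ^ (-η)`. These distances run through
`3, …, t - 1` upstream and `1, …, T - t - 2` downstream. For `η ≥ 2` each side is controlled by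
`∑ n⁻² = π²/6`, and the terms `1` and `1/4` missing upstream bring the total down to
`4 (π²/6 - 5/4 + π²/6) κP = (4π²/3 - 5) κP`, which is below `π² κP` because `π² < 15`.
-/

open Finset Real

/-- Interference power at node `t` under two-hop myopic decode-forward in the
`T`-node Gaussian multiple-relay channel with unit node spacing. -/
noncomputable def Pint (η κ P : ℝ) (T t : ℕ) (α : ℕ → ℝ) : ℝ :=
  (∑ j ∈ Finset.Icc 3 (t - 2),
      (Real.sqrt ((j : ℝ) ^ (-η) * (1 - α (t - j)) * (κ * P)) +
        Real.sqrt (((j : ℝ) + 1) ^ (-η) * α (t - j - 1) * (κ * P))) ^ 2)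
  + ((t : ℝ) - 1) ^ (-η) * (1 - α 1) * (κ * P)
  + (∑ j ∈ Finset.Icc 1 (T - t - 3),
      (Real.sqrt ((j : ℝ) ^ (-η) * α (t + j) * (κ * P)) +
        Real.sqrt (((j : ℝ) + 1) ^ (-η) * (1 - α (t + j + 1)) * (κ * P))) ^ 2)
  + (Real.sqrt (((T : ℝ) - (t : ℝ) - 2) ^ (-η) * α (T - 2) * (κ * P)) +
      Real.sqrt (((T : ℝ) - (t : ℝ) - 1) ^ (-η) * (κ * P))) ^ 2

/-- The part of `Pint` that comes from the nodes before node `t`, as a function of the power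
constant `c = κ P`. -/
noncomputable def upstreamInterference (η c : ℝ) (t : ℕ) (α : ℕ → ℝ) : ℝ :=
  (∑ j ∈ Finset.Icc 3 (t - 2),
      (√((j : ℝ) ^ (-η) * (1 - α (t - j)) * c) +
        √(((j : ℝ) + 1) ^ (-η) * α (t - j - 1) * c)) ^ 2)
  + ((t : ℝ) - 1) ^ (-η) * (1 - α 1) * c

/-- The part of `Pint` that comes from the nodes after node `t`, as a function of the power
constant `c = κ P`. -/
noncomputable def downstreamInterference (η c : ℝ) (T t : ℕ) (α : ℕ → ℝ) : ℝ :=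
  (∑ j ∈ Finset.Icc 1 (T - t - 3),
      (√((j : ℝ) ^ (-η) * α (t + j) * c) +
        √(((j : ℝ) + 1) ^ (-η) * (1 - α (t + j + 1)) * c)) ^ 2)
  + (√(((T : ℝ) - (t : ℝ) - 2) ^ (-η) * α (T - 2) * c) +
      √(((T : ℝ) - (t : ℝ) - 1) ^ (-η) * c)) ^ 2

lemma pint_eq_upstream_add_downstream (η κ P : ℝ) (T t : ℕ) (α : ℕ → ℝ) :
    Pint η κ P T t α =
      upstreamInterference η (κ * P) t α + downstreamInterference η (κ * P) T t α := by
  simp only [Pint, upstreamInterference, downstreamInterference, add_assoc]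

section ReceivedPower

variable {η c x y a b : ℝ}

lemma rpow_neg_mul_mul_le (hη : 0 ≤ η) (hc : 0 ≤ c) (hx : 0 < x) (hxy : x ≤ y) (ha : a ≤ 1) :
    y ^ (-η) * a * c ≤ x ^ (-η) * c := by
  have hy : 0 ≤ y ^ (-η) := rpow_nonneg (hx.le.trans hxy) _
  gcongr
  calc y ^ (-η) * a ≤ y ^ (-η) := mul_le_of_le_one_right hy ha
    _ ≤ x ^ (-η) := rpow_le_rpow_of_nonpos hx hxy (neg_nonpos.mpr hη)

lemma sqrt_add_sqrt_sq_le {u v w : ℝ} (hu : u ≤ w) (hv : v ≤ w) (hw : 0 ≤ w) :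
    (√u + √v) ^ 2 ≤ 4 * w :=
  calc (√u + √v) ^ 2 ≤ (√w + √w) ^ 2 := by gcongr
    _ = 4 * √w ^ 2 := by ring
    _ = 4 * w := by rw [sq_sqrt hw]

lemma coherent_power_le (hη : 0 ≤ η) (hc : 0 ≤ c) (hx : 0 < x) (hxy : x ≤ y)
    (ha : a ≤ 1) (hb : b ≤ 1) :
    (√(x ^ (-η) * a * c) + √(y ^ (-η) * b * c)) ^ 2 ≤ 4 * c * x ^ (-η) :=
  calc (√(x ^ (-η) * a * c) + √(y ^ (-η) * b * c)) ^ 2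
      ≤ 4 * (x ^ (-η) * c) :=
        sqrt_add_sqrt_sq_le (rpow_neg_mul_mul_le hη hc hx le_rfl ha)
          (rpow_neg_mul_mul_le hη hc hx hxy hb) (by positivity)
    _ = 4 * c * x ^ (-η) := by ring

end ReceivedPower

section Interference

variable {η c : ℝ} {T t : ℕ} {α : ℕ → ℝ}

lemma upstreamInterference_le (hη : 0 ≤ η) (hc : 0 ≤ c) (ht : 4 ≤ t)
    (hα : ∀ i, 1 ≤ i → i ≤ t - 3 → α i ∈ Set.Icc (0 : ℝ) 1) :
    upstreamInterference η c t α ≤ 4 * c * ∑ j ∈ Finset.Icc 3 (t - 1), (j : ℝ) ^ (-η) := by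
  have hpair : ∀ j ∈ Finset.Icc 3 (t - 2),
      (√((j : ℝ) ^ (-η) * (1 - α (t - j)) * c) +
        √(((j : ℝ) + 1) ^ (-η) * α (t - j - 1) * c)) ^ 2 ≤ 4 * c * (j : ℝ) ^ (-η) := by
    intro j hj
    rw [Finset.mem_Icc] at hj
    exact coherent_power_le hη hc (Nat.cast_pos.mpr (by lia)) (by linarith)
      (sub_le_self 1 (hα _ (by lia) (by lia)).1) (hα _ (by lia) (by lia)).2
  have hfirst : ((t : ℝ) - 1) ^ (-η) * (1 - α 1) * c ≤ 4 * c * ((t - 1 : ℕ) : ℝ) ^ (-η) := by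
    rw [← Nat.cast_pred (by lia)]
    calc ((t - 1 : ℕ) : ℝ) ^ (-η) * (1 - α 1) * c
        ≤ ((t - 1 : ℕ) : ℝ) ^ (-η) * c :=
          rpow_neg_mul_mul_le hη hc (Nat.cast_pos.mpr (by lia)) le_rfl
            (sub_le_self 1 (hα 1 le_rfl (by lia)).1)
      _ ≤ 4 * (((t - 1 : ℕ) : ℝ) ^ (-η) * c) :=
          le_mul_of_one_le_left (by positivity) (by norm_num)
      _ = 4 * c * ((t - 1 : ℕ) : ℝ) ^ (-η) := by ring
  calc upstreamInterference η c t α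
      ≤ (∑ j ∈ Finset.Icc 3 (t - 2), 4 * c * (j : ℝ) ^ (-η)) +
          4 * c * ((t - 1 : ℕ) : ℝ) ^ (-η) := add_le_add (sum_le_sum hpair) hfirst
    _ = ∑ j ∈ Finset.Icc 3 (t - 1), 4 * c * (j : ℝ) ^ (-η) := by
        obtain ⟨m, rfl⟩ := Nat.exists_eq_add_of_le' ht
        exact (sum_Icc_succ_top (by lia) _).symm
    _ = 4 * c * ∑ j ∈ Finset.Icc 3 (t - 1), (j : ℝ) ^ (-η) :=
        (mul_sum _ _ _).symm

lemma downstreamInterference_le (hη : 0 ≤ η) (hc : 0 ≤ c) (ht : t + 3 ≤ T)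
    (hα : ∀ i, t + 1 ≤ i → i ≤ T - 2 → α i ∈ Set.Icc (0 : ℝ) 1) :
    downstreamInterference η c T t α ≤
      4 * c * ∑ j ∈ Finset.Icc 1 (T - t - 2), (j : ℝ) ^ (-η) := by
  have hpair : ∀ j ∈ Finset.Icc 1 (T - t - 3),
      (√((j : ℝ) ^ (-η) * α (t + j) * c) +
        √(((j : ℝ) + 1) ^ (-η) * (1 - α (t + j + 1)) * c)) ^ 2 ≤ 4 * c * (j : ℝ) ^ (-η) := by
    intro j hj
    rw [Finset.mem_Icc] at hj
    exact coherent_power_le hη hc (Nat.cast_pos.mpr hj.1) (by linarith)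
      (hα _ (by lia) (by lia)).2 (sub_le_self 1 (hα _ (by lia) (by lia)).1)
  have hlast : (√(((T : ℝ) - (t : ℝ) - 2) ^ (-η) * α (T - 2) * c) +
      √(((T : ℝ) - (t : ℝ) - 1) ^ (-η) * c)) ^ 2 ≤ 4 * c * ((T - t - 2 : ℕ) : ℝ) ^ (-η) := by
    have hcast : ((T - t - 2 : ℕ) : ℝ) = (T : ℝ) - t - 2 := by
      rw [Nat.cast_sub (by lia), Nat.cast_sub (by lia), Nat.cast_ofNat]
    have hpos : 0 < (T : ℝ) - t - 2 := hcast ▸ Nat.cast_pos.mpr (by lia)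
    rw [hcast]
    simpa only [mul_one] using coherent_power_le hη hc hpos
      (by linarith : (T : ℝ) - t - 2 ≤ T - t - 1) (hα (T - 2) (by lia) le_rfl).2 le_rfl
  calc downstreamInterference η c T t α
      ≤ (∑ j ∈ Finset.Icc 1 (T - t - 3), 4 * c * (j : ℝ) ^ (-η)) +
          4 * c * ((T - t - 2 : ℕ) : ℝ) ^ (-η) := add_le_add (sum_le_sum hpair) hlast
    _ = ∑ j ∈ Finset.Icc 1 (T - t - 2), 4 * c * (j : ℝ) ^ (-η) := by
        rw [show T - t - 2 = T - t - 3 + 1 by lia, sum_Icc_succ_top (by lia)]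
    _ = 4 * c * ∑ j ∈ Finset.Icc 1 (T - t - 2), (j : ℝ) ^ (-η) :=
        (mul_sum _ _ _).symm

lemma pint_le {κ P : ℝ} (hη : 0 ≤ η) (hκP : 0 ≤ κ * P) (ht : 4 ≤ t) (htT : t + 3 ≤ T)
    (hα : ∀ i, 1 ≤ i → i ≤ T - 2 → α i ∈ Set.Icc (0 : ℝ) 1) :
    Pint η κ P T t α ≤ 4 * (κ * P) *
      (∑ j ∈ Finset.Icc 3 (t - 1), (j : ℝ) ^ (-η) +
        ∑ j ∈ Finset.Icc 1 (T - t - 2), (j : ℝ) ^ (-η)) := by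
  rw [pint_eq_upstream_add_downstream, mul_add]
  exact add_le_add
    (upstreamInterference_le hη hκP ht fun i h₁ _ => hα i h₁ (by lia))
    (downstreamInterference_le hη hκP htT fun i _ h₂ => hα i (by lia) h₂)

end Interference

section SumRpowNeg

variable {η : ℝ}

lemma natCast_rpow_neg_le_one_div_sq (hη : 2 ≤ η) (n : ℕ) :
    (n : ℝ) ^ (-η) ≤ 1 / (n : ℝ) ^ 2 := by
  obtain rfl | hn := n.eq_zero_or_pos
  · simp [zero_rpow (by linarith : -η ≠ 0)]
  · calc (n : ℝ) ^ (-η) ≤ (n : ℝ) ^ (-2 : ℝ) :=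
          rpow_le_rpow_of_exponent_le (Nat.one_le_cast.mpr hn) (neg_le_neg hη)
      _ = 1 / (n : ℝ) ^ 2 := by rw [rpow_neg n.cast_nonneg, rpow_two, one_div]

lemma sum_rpow_neg_le_sum_one_div_sq (hη : 2 ≤ η) (s : Finset ℕ) :
    ∑ j ∈ s, (j : ℝ) ^ (-η) ≤ ∑ j ∈ s, 1 / (j : ℝ) ^ 2 :=
  sum_le_sum fun j _ => natCast_rpow_neg_le_one_div_sq hη j

lemma sum_one_div_sq_le (s : Finset ℕ) : ∑ j ∈ s, 1 / (j : ℝ) ^ 2 ≤ π ^ 2 / 6 :=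
  sum_le_hasSum s (fun _ _ => by positivity) hasSum_zeta_two

lemma sum_Icc_three_one_div_sq_le (n : ℕ) :
    ∑ j ∈ Finset.Icc 3 n, 1 / (j : ℝ) ^ 2 ≤ π ^ 2 / 6 - 5 / 4 := by
  have hdisj : Disjoint {1, 2} (Finset.Icc 3 n) := by simp
  have hfirst : ∑ j ∈ ({1, 2} : Finset ℕ), 1 / (j : ℝ) ^ 2 = 5 / 4 := by norm_num
  have hall := sum_one_div_sq_le ({1, 2} ∪ Finset.Icc 3 n)
  rw [sum_union hdisj, hfirst] at hall
  linarith

end SumRpowNeg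

/-- The interference power at any interior node `t` (with `4 ≤ t ≤ T − 3`) is
strictly less than `π² κ P`. -/
theorem pint_lt_pi_sq_kP
    (η κ P : ℝ) (hη : 2 ≤ η) (hκ : 0 < κ) (hP : 0 < P)
    (T t : ℕ) (hT : 7 ≤ T) (ht4 : 4 ≤ t) (htT : t ≤ T - 3)
    (α : ℕ → ℝ) (hα : ∀ i, 1 ≤ i → i ≤ T - 2 → α i ∈ Set.Icc (0 : ℝ) 1) :
    Pint η κ P T t α < Real.pi ^ 2 * κ * P := by
  have hκP : 0 < κ * P := mul_pos hκ hP
  have hπ : π ^ 2 < 15 := by nlinarith [pi_lt_d2, pi_pos]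
  have hup := (sum_rpow_neg_le_sum_one_div_sq hη _).trans (sum_Icc_three_one_div_sq_le (t - 1))
  have hdown := (sum_rpow_neg_le_sum_one_div_sq hη _).trans
    (sum_one_div_sq_le (Finset.Icc 1 (T - t - 2)))
  calc Pint η κ P T t α
      ≤ 4 * (κ * P) * (∑ j ∈ Finset.Icc 3 (t - 1), (j : ℝ) ^ (-η) +
          ∑ j ∈ Finset.Icc 1 (T - t - 2), (j : ℝ) ^ (-η)) :=
        pint_le (by linarith) hκP.le ht4 (by lia) hα
    _ ≤ 4 * (κ * P) * ((π ^ 2 / 6 - 5 / 4) + π ^ 2 / 6) := by gcongr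
    _ = (4 * π ^ 2 / 3 - 5) * (κ * P) := by ring
    _ < π ^ 2 * (κ * P) := mul_lt_mul_of_pos_right (by linarith) hκP
    _ = π ^ 2 * κ * P := by ring
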